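/- Let W be a graphon, let φ = (φ_t)_{t=0}^L be an L-layer MPNN model, and let ψ : ℝ^{d_L} → ℝ^d be continuous. Then the graphon-level MPNN output equals the MPNN output on the distribution of iterated degree measures of W: h_W = h_{ν_{W,L}}. -/

import Mathlib

open MeasureTheory Set

noncomputable section

/-- Borel measures of total mass at most one on `X`. -/
abbrev SubProb (X : Type) [MeasurableSpace X] : Type :=
  {μ : Measure X // μ Set.univ ≤ 1}

/-- The weak topology on `SubProb X`: the coarsest topology making all maps
`μ ↦ ∫ f dμ` for bounded continuous `f` continuous. -/
def subProbWeakTop (X : Type) [MeasurableSpace X] [TopologicalSpace X] :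
    TopologicalSpace (SubProb X) :=
  ⨅ f : BoundedContinuousFunction X ℝ,
    TopologicalSpace.induced (fun μ => ∫ x, f x ∂μ.val) inferInstance

/-- Iterated degree measure spaces with their (weak) topologies:
`M 0` is a one-point space and `M (h+1)` is the space of Borel measures of total
mass at most one on `M h` with the weak topology. -/
def IDM : ℕ → Σ X : Type, TopologicalSpace X
  | 0 => ⟨Unit, inferInstance⟩
  | (h+1) =>
      let p := IDM h
      ⟨@SubProb p.1 (@borel p.1 p.2), @subProbWeakTop p.1 (@borel p.1 p.2) p.2⟩

/-- The space of iterated degree measures of depth `h`. -/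
def M (h : ℕ) : Type := (IDM h).1

instance (h : ℕ) : TopologicalSpace (M h) := (IDM h).2
instance (h : ℕ) : MeasurableSpace (M h) := borel (M h)
instance (h : ℕ) : BorelSpace (M h) := ⟨rfl⟩

def toSub {h : ℕ} (α : M (h+1)) : SubProb (M h) := α
def ofSub {h : ℕ} (μ : SubProb (M h)) : M (h+1) := μ
/-- The underlying measure of an iterated degree measure. -/
def toMeas {h : ℕ} (α : M (h+1)) : Measure (M h) := (toSub α).1

/-- An MPNN model: dimensions `d t`, an initial feature `φ₀ ∈ ℝ^{d 0}`, and
continuous update functions `φ t : ℝ^{d t} → ℝ^{d (t+1)}`. An `L`-layer model uses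
the layers `φ 0, …, φ (L-1)`. -/
structure MPNNModel where
  d : ℕ → ℕ
  φ₀ : EuclideanSpace ℝ (Fin (d 0))
  φ : (t : ℕ) → EuclideanSpace ℝ (Fin (d t)) → EuclideanSpace ℝ (Fin (d (t+1)))
  cont : ∀ t, Continuous (φ t)

/-- MPNN features on iterated degree measures: `h^{(0)}_α = φ₀` and
`h^{(t+1)}_α = φ_t (∫ h^{(t)}_β dα(β))`. -/
def idmFeat (m : MPNNModel) : (t : ℕ) → M t → EuclideanSpace ℝ (Fin (m.d t))
  | 0, _ => m.φ₀
  | (t+1), α => m.φ t (∫ β, idmFeat m t β ∂(toMeas α))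

/-- A graphon: a symmetric measurable kernel `[0,1]² → [0,1]` (here defined on all
of `ℝ²`, with `[0,1]` carrying the Lebesgue measure). -/
structure Graphon where
  W : ℝ → ℝ → ℝ
  symm : ∀ x y, W x y = W y x
  mem : ∀ x y, W x y ∈ Set.Icc (0:ℝ) 1
  meas : Measurable (Function.uncurry W)

/-- MPNN point features on a graphon kernel. -/
def graphonFeat (m : MPNNModel) (W : ℝ → ℝ → ℝ) :
    (t : ℕ) → ℝ → EuclideanSpace ℝ (Fin (m.d t))
  | 0, _ => m.φ₀
  | (t+1), x => m.φ t (∫ y in Set.Icc (0:ℝ) 1, W x y • graphonFeat m W t y)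

/-- The graphon 1-WL maps `i_{W,h} : [0,1] → M h`: `i_{W,h+1}(x)` is the pushforward
along `i_{W,h}` of the measure on `[0,1]` with density `W(x,·)`. -/
def wlMap (W : Graphon) : (h : ℕ) → ℝ → M h
  | 0, _ => ()
  | (h+1), x => ofSub ⟨Measure.map (wlMap W h)
      ((volume.restrict (Set.Icc (0:ℝ) 1)).withDensity fun y =>
        ENNReal.ofReal (W.W x y)), by
      by_cases hf : AEMeasurable (wlMap W h)
          ((volume.restrict (Set.Icc (0:ℝ) 1)).withDensity fun y =>
            ENNReal.ofReal (W.W x y))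
      · rw [Measure.map_apply_of_aemeasurable hf MeasurableSet.univ, Set.preimage_univ,
          withDensity_apply _ MeasurableSet.univ, Measure.restrict_univ]
        calc ∫⁻ y, ENNReal.ofReal (W.W x y) ∂(volume.restrict (Set.Icc (0:ℝ) 1))
            ≤ ∫⁻ _, 1 ∂(volume.restrict (Set.Icc (0:ℝ) 1)) :=
              lintegral_mono fun y => ENNReal.ofReal_le_one.mpr (W.mem x y).2
          _ ≤ 1 := by simp [Real.volume_Icc]
      · rw [Measure.map_of_not_aemeasurable hf]
        simp⟩


/-- The distribution of iterated degree measures `ν_{W,h}` of a graphon. -/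
def nuWh (W : Graphon) (h : ℕ) : Measure (M h) :=
  Measure.map (wlMap W h) (volume.restrict (Set.Icc (0:ℝ) 1))

/-!
By induction on `t`, the graphon feature factors through the 1-WL map: `h_x^{(t)} = h^{(t)}_α` with
`α = i_{W,t}(x)`. Indeed `i_{W,t+1}(x)` is a pushforward along `i_{W,t}`, so integrating against it
is integrating `W(x, ·)` times a pullback; at the top level the same change of variables along
`ν_{W,L} = (i_{W,L})_* λ` concludes.

The changes of variables need `i_{W,t}` to be Borel measurable and the features to be continuous.
Both follow from the weak topology of each `M_t` being compact and metrizable: the integrals of a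
dense sequence of continuous functions embed `M_{t+1}` as a closed subset of `ℝ^ℕ`, so it suffices
to check measurability on these integrals.
-/

open Topology TopologicalSpace
open scoped BoundedContinuousFunction

theorem continuous_integral_continuousMap {X E : Type*} [TopologicalSpace X] [CompactSpace X]
    [MeasurableSpace X] [BorelSpace X] [NormedAddCommGroup E] [NormedSpace ℝ E]
    [SecondCountableTopologyEither X E] (μ : Measure X) [IsFiniteMeasure μ] :
    Continuous fun f : C(X, E) => ∫ x, f x ∂μ :=
  (continuous_integral.comp (ContinuousMap.toLp 1 μ ℝ).continuous).congr fun f =>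
    integral_congr_ae (ContinuousMap.coeFn_toLp μ f)

theorem exists_seq_continuousMap_injective_integral (X : Type*) [TopologicalSpace X]
    [CompactSpace X] [MetrizableSpace X] [MeasurableSpace X] [BorelSpace X] :
    ∃ g : ℕ → C(X, ℝ), Function.Injective fun (μ : FiniteMeasure X) n => ∫ x, g n x ∂μ := by
  let _ := metrizableSpaceMetric X
  refine ⟨denseSeq C(X, ℝ), fun μ ν hμν => FiniteMeasure.toMeasure_injective ?_⟩
  have integral_eq : (fun f : C(X, ℝ) => ∫ x, f x ∂μ) = fun f => ∫ x, f x ∂ν :=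
    (denseRange_denseSeq C(X, ℝ)).equalizer (continuous_integral_continuousMap _)
      (continuous_integral_continuousMap _) hμν
  exact ext_of_forall_integral_eq_of_IsFiniteMeasure fun f => congrFun integral_eq f.toContinuousMap

theorem integral_map_withDensity_ofReal {Y Z E : Type*} [MeasurableSpace Y] [MeasurableSpace Z]
    [NormedAddCommGroup E] [NormedSpace ℝ E] {μ : Measure Y} {w : Y → ℝ} {T : Y → Z} {f : Z → E}
    (hw : Measurable w) (hw₀ : 0 ≤ w) (hT : Measurable T) (hf : StronglyMeasurable f) :
    ∫ z, f z ∂((μ.withDensity fun y => ENNReal.ofReal (w y)).map T) = ∫ y, w y • f (T y) ∂μ := by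
  rw [integral_map hT.aemeasurable hf.aestronglyMeasurable,
    integral_withDensity_eq_integral_toReal_smul hw.ennreal_ofReal
      (.of_forall fun _ => ENNReal.ofReal_lt_top)]
  simp only [ENNReal.toReal_ofReal (hw₀ _)]

namespace SubProb

variable {X : Type} [MeasurableSpace X]

instance isFiniteMeasure_val (μ : SubProb X) : IsFiniteMeasure μ.val :=
  ⟨μ.2.trans_lt ENNReal.one_lt_top⟩

/-- A measure of mass at most one viewed in Mathlib's type of finite measures, which carries the
weak topology as well. -/
def toFiniteMeasure (μ : SubProb X) : FiniteMeasure X := ⟨μ.val, inferInstance⟩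

theorem toFiniteMeasure_injective : Function.Injective (toFiniteMeasure (X := X)) :=
  fun _ _ h => Subtype.ext (congrArg FiniteMeasure.toMeasure h)

theorem range_toFiniteMeasure :
    range (toFiniteMeasure (X := X)) = {μ : FiniteMeasure X | μ.mass ≤ 1} := by
  ext μ
  have mass_le_one_iff : μ.mass ≤ 1 ↔ (μ : Measure X) univ ≤ 1 := by
    rw [← FiniteMeasure.ennreal_mass, ENNReal.coe_le_one_iff]
  rw [mem_ofPred_eq, mass_le_one_iff]
  exact ⟨by rintro ⟨ν, rfl⟩; exact ν.2, fun hμ => ⟨⟨μ, hμ⟩, rfl⟩⟩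

variable [TopologicalSpace X]

instance topologicalSpace : TopologicalSpace (SubProb X) := subProbWeakTop X

theorem continuous_integral (f : X →ᵇ ℝ) : Continuous fun μ : SubProb X => ∫ x, f x ∂μ.val :=
  continuous_iff_le_induced.2 (iInf_le _ f)

theorem isInducing_toFiniteMeasure [OpensMeasurableSpace X] :
    IsInducing (toFiniteMeasure (X := X)) := by
  refine ⟨le_antisymm (Continuous.le_induced ?_) (le_iInf fun f => ?_)⟩
  · exact FiniteMeasure.continuous_iff_forall_continuous_integral.2 continuous_integral
  · exact (induced_mono (FiniteMeasure.continuous_integral_boundedContinuousFunction f).le_induced)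
      |>.trans_eq induced_compose

theorem continuous_integral_of_finiteDimensional [OpensMeasurableSpace X] {E : Type*}
    [NormedAddCommGroup E] [NormedSpace ℝ E] [FiniteDimensional ℝ E] (f : X →ᵇ E) :
    Continuous fun μ : SubProb X => ∫ x, f x ∂μ.val := by
  borelize E
  let b := Module.finBasis ℝ E
  refine b.equivFunL.toHomeomorph.comp_continuous_iff.1 (continuous_pi fun i => ?_)
  let coord : E →L[ℝ] ℝ := (b.coord i).toContinuousLinearMap
  exact (continuous_integral (coord.compLeftContinuousBounded X f)).congr fun μ =>
    coord.integral_comp_comm (f.integrable μ.val)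

variable [BorelSpace X] [CompactSpace X]

instance compactSpace [T2Space X] : CompactSpace (SubProb X) := by
  rw [← isCompact_univ_iff, isInducing_toFiniteMeasure.isCompact_iff, image_univ,
    range_toFiniteMeasure]
  exact isCompact_setOfPred_finiteMeasure_le_of_compactSpace X 1

variable [MetrizableSpace X]

variable (X) in
theorem exists_seq_continuousMap_isClosedEmbedding_integral :
    ∃ g : ℕ → C(X, ℝ), IsClosedEmbedding fun (μ : SubProb X) n => ∫ x, g n x ∂μ.val := by
  obtain ⟨g, g_injective⟩ := exists_seq_continuousMap_injective_integral X
  have integrals_continuous : Continuous fun (μ : SubProb X) n => ∫ x, g n x ∂μ.val :=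
    continuous_pi fun n => continuous_integral (.mkOfCompact (g n))
  exact ⟨g, integrals_continuous.isClosedEmbedding (g_injective.comp toFiniteMeasure_injective)⟩

instance metrizableSpace : MetrizableSpace (SubProb X) :=
  have ⟨_, hg⟩ := exists_seq_continuousMap_isClosedEmbedding_integral X
  hg.isEmbedding.metrizableSpace

theorem measurable_borel_of_forall_integral {Ω : Type*} [MeasurableSpace Ω] {F : Ω → SubProb X}
    (hF : ∀ f : C(X, ℝ), Measurable fun ω => ∫ x, f x ∂(F ω).val) :
    Measurable[_, borel (SubProb X)] F := by
  obtain ⟨g, hg⟩ := exists_seq_continuousMap_isClosedEmbedding_integral X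
  -- The Borel structure has to shadow the subtype one, which comes from evaluation on sets.
  let _ : MeasurableSpace (SubProb X) := borel (SubProb X)
  have : BorelSpace (SubProb X) := ⟨rfl⟩
  exact hg.measurableEmbedding.measurable_comp_iff.1 (measurable_pi_lambda _ fun n => hF (g n))

end SubProb

namespace M

theorem compactSpace_and_metrizableSpace : ∀ h, CompactSpace (M h) ∧ MetrizableSpace (M h)
  | 0 => ⟨inferInstanceAs (CompactSpace Unit), inferInstanceAs (MetrizableSpace Unit)⟩
  | h + 1 =>
    have ⟨_, _⟩ := compactSpace_and_metrizableSpace h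
    ⟨SubProb.compactSpace (X := M h), SubProb.metrizableSpace (X := M h)⟩

instance (h : ℕ) : CompactSpace (M h) := (compactSpace_and_metrizableSpace h).1

instance (h : ℕ) : MetrizableSpace (M h) := (compactSpace_and_metrizableSpace h).2

theorem continuous_integral {h : ℕ} {E : Type*} [NormedAddCommGroup E] [NormedSpace ℝ E]
    [FiniteDimensional ℝ E] {f : M h → E} (hf : Continuous f) :
    Continuous fun α : M (h + 1) => ∫ β, f β ∂(toMeas α) :=
  SubProb.continuous_integral_of_finiteDimensional (X := M h) (.mkOfCompact ⟨f, hf⟩)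

theorem measurable_of_forall_integral {h : ℕ} {Ω : Type*} [MeasurableSpace Ω] {F : Ω → M (h + 1)}
    (hF : ∀ f : C(M h, ℝ), Measurable fun ω => ∫ β, f β ∂(toMeas (F ω))) : Measurable F :=
  SubProb.measurable_borel_of_forall_integral (X := M h) hF

end M

theorem integral_toMeas_wlMap_succ {W : Graphon} {h : ℕ} (hW : Measurable (wlMap W h)) {E : Type*}
    [NormedAddCommGroup E] [NormedSpace ℝ E] {f : M h → E} (hf : StronglyMeasurable f) (x : ℝ) :
    ∫ β, f β ∂(toMeas (wlMap W (h + 1) x)) = ∫ y in Icc (0 : ℝ) 1, W.W x y • f (wlMap W h y) :=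
  integral_map_withDensity_ofReal W.meas.of_uncurry_left (fun y => (W.mem x y).1) hW hf

theorem measurable_wlMap (W : Graphon) (h : ℕ) : Measurable (wlMap W h) := by
  induction h with
  | zero => exact measurable_const
  | succ h ih =>
    refine M.measurable_of_forall_integral fun f => ?_
    simp only [integral_toMeas_wlMap_succ ih f.continuous.stronglyMeasurable]
    have integrand_measurable : Measurable fun p : ℝ × ℝ => W.W p.1 p.2 • f (wlMap W h p.2) :=
      W.meas.smul (f.continuous.measurable.comp (ih.comp measurable_snd))
    exact integrand_measurable.stronglyMeasurable.integral_prod_right'.measurable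

theorem continuous_idmFeat (m : MPNNModel) (t : ℕ) : Continuous (idmFeat m t) := by
  induction t with
  | zero => exact continuous_const
  | succ t ih => exact (m.cont t).comp (M.continuous_integral ih)

theorem graphonFeat_eq_idmFeat_wlMap (W : Graphon) (m : MPNNModel) (t : ℕ) (x : ℝ) :
    graphonFeat m W.W t x = idmFeat m t (wlMap W t x) := by
  induction t generalizing x with
  | zero => rfl
  | succ t ih =>
    simp only [graphonFeat, idmFeat, ih, integral_toMeas_wlMap_succ (measurable_wlMap W t)
      (continuous_idmFeat m t).stronglyMeasurable]

theorem graphon_output_eq_didm_output_general (W : Graphon) (m : MPNNModel) (L : ℕ) :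
    ∫ x in Icc (0 : ℝ) 1, graphonFeat m W.W L x = ∫ α, idmFeat m L α ∂(nuWh W L) := by
  rw [nuWh, integral_map (measurable_wlMap W L).aemeasurable
    (continuous_idmFeat m L).aestronglyMeasurable]
  simp only [graphonFeat_eq_idmFeat_wlMap]

/-- The graphon-level MPNN output equals the MPNN output on the distribution of
iterated degree measures `ν_{W,L}` of the graphon. -/
theorem graphon_output_eq_didm_output (W : Graphon) (m : MPNNModel) (L dout : ℕ)
    (ψ : EuclideanSpace ℝ (Fin (m.d L)) → EuclideanSpace ℝ (Fin dout))
    (hψ : Continuous ψ) :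
    ψ (∫ x in Set.Icc (0:ℝ) 1, graphonFeat m W.W L x) =
      ψ (∫ α, idmFeat m L α ∂(nuWh W L)) :=
  congrArg ψ (graphon_output_eq_didm_output_general W m L)

end
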